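/- arXiv:2106.07494 — 2 statements merged into one kernel-verified Lean document; each statement's English description precedes it below -/
import Mathlib

section
/- For every integer n ≥ 1, every subset S ⊆ {1,…,n−1}, and every i ∈ S, the number of permutations σ of {1,…,n} such that σ fixes a prefix of size i and σ does not fix a prefix of size s for any s ∈ S with s > i equals i!·c_{n−i}^{S_i}, where S_i = {1,…,n−i−1} ∩ {s−i : s ∈ S}. -/
open Nat Finset

/-- The prefix `{1, …, j}` of `{1, …, n}`. We represent `{1, …, n}` by `Fin n`,
an element `x : Fin n` having label `x.val + 1`; so the prefix of size `j` is the
set of elements with label at most `j`. -/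
def pref (n j : ℕ) : Finset (Fin n) :=
  Finset.univ.filter (fun x => x.val + 1 ≤ j)

/-- The segment `{u, …, v}` inside `{1, …, n}` (labels as above). -/
def seg (n u v : ℕ) : Finset (Fin n) :=
  Finset.univ.filter (fun x => u ≤ x.val + 1 ∧ x.val + 1 ≤ v)

/-- A permutation `σ` of `{1, …, n}` fixes a prefix of size `j` if
`σ({1, …, j}) = {1, …, j}`. -/
def FixesPrefix {n : ℕ} (σ : Equiv.Perm (Fin n)) (j : ℕ) : Prop :=
  (pref n j).image σ = pref n j

/-- `c n`: the number of connected permutations of size `n`, i.e. permutations of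
`{1, …, n}` fixing no prefix of size `j` for any `1 ≤ j ≤ n - 1`. -/
noncomputable def c (n : ℕ) : ℕ :=
  Nat.card {σ : Equiv.Perm (Fin n) // ∀ j, 1 ≤ j → j ≤ n - 1 → ¬ FixesPrefix σ j}

/-- `cS n S`: the number of `S`-connected permutations of size `n`, i.e. permutations of
`{1, …, n}` fixing no prefix of size `j` for any `j ∈ S`. -/
noncomputable def cS (n : ℕ) (S : Finset ℕ) : ℕ :=
  Nat.card {σ : Equiv.Perm (Fin n) // ∀ j ∈ S, ¬ FixesPrefix σ j}

/-! A permutation of `{1, …, i + m}` fixes the prefix of size `i` exactly when it is a direct sum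
`a ⊕ b` of permutations of sizes `i` and `m`, and `a ⊕ b` fixes the prefix of size `i + t` exactly
when `b` fixes the prefix of size `t`. So `a` is arbitrary, contributing the factor `i!`, while the
condition at each size `s > i` in `S` becomes the condition on `b` at size `s - i`. -/

section FixesPrefix

variable {n : ℕ}

theorem mem_pref {j : ℕ} {x : Fin n} : x ∈ pref n j ↔ x.val < j := by
  simp only [pref, Finset.mem_filter, Finset.mem_univ, true_and, Nat.succ_le_iff]

theorem fixesPrefix_iff_forall_lt {σ : Equiv.Perm (Fin n)} {j : ℕ} :
    FixesPrefix σ j ↔ ∀ x : Fin n, x.val < j → (σ x).val < j := by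
  have image_subset_iff : (pref n j).image σ ⊆ pref n j ↔
      ∀ x : Fin n, x.val < j → (σ x).val < j := by
    simp only [Finset.image_subset_iff, mem_pref]
  rw [← image_subset_iff]
  exact ⟨fun h ↦ h.subset, fun h ↦
    Finset.eq_of_subset_of_card_le h (Finset.card_image_of_injective _ σ.injective).ge⟩

theorem fixesPrefix_zero (σ : Equiv.Perm (Fin n)) : FixesPrefix σ 0 := by
  simp only [fixesPrefix_iff_forall_lt, Nat.not_lt_zero, false_imp_iff, implies_true]

end FixesPrefix

section DirectSum

variable {i m : ℕ}

/-- The direct sum `a ⊕ b` of two permutations, acting as `a` on the first `i` elements and as the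
translate of `b` on the last `m`. -/
def permDirectSum (a : Equiv.Perm (Fin i)) (b : Equiv.Perm (Fin m)) : Equiv.Perm (Fin (i + m)) :=
  finSumFinEquiv.permCongr (Equiv.Perm.sumCongr a b)

theorem permDirectSum_castAdd (a : Equiv.Perm (Fin i)) (b : Equiv.Perm (Fin m)) (x : Fin i) :
    permDirectSum a b (Fin.castAdd m x) = Fin.castAdd m (a x) := by
  simp [permDirectSum, Equiv.permCongr_apply]

theorem permDirectSum_natAdd (a : Equiv.Perm (Fin i)) (b : Equiv.Perm (Fin m)) (x : Fin m) :
    permDirectSum a b (Fin.natAdd i x) = Fin.natAdd i (b x) := by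
  simp [permDirectSum, Equiv.permCongr_apply]

theorem permDirectSum_injective :
    Function.Injective fun p : Equiv.Perm (Fin i) × Equiv.Perm (Fin m) ↦
      permDirectSum p.1 p.2 :=
  finSumFinEquiv.permCongr.injective.comp Equiv.Perm.sumCongrHom_injective

theorem fixesPrefix_permDirectSum_add_iff {a : Equiv.Perm (Fin i)} {b : Equiv.Perm (Fin m)}
    {t : ℕ} : FixesPrefix (permDirectSum a b) (i + t) ↔ FixesPrefix b t := by
  have castAdd_lt (x : Fin i) : x.val < i + t := by omega
  simp only [fixesPrefix_iff_forall_lt, Fin.forall_fin_add, permDirectSum_castAdd,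
    permDirectSum_natAdd, Fin.val_castAdd, Fin.val_natAdd, castAdd_lt, Nat.add_lt_add_iff_left,
    implies_true, true_and]

theorem fixesPrefix_iff_exists_permDirectSum {σ : Equiv.Perm (Fin (i + m))} :
    FixesPrefix σ i ↔
      ∃ p : Equiv.Perm (Fin i) × Equiv.Perm (Fin m), permDirectSum p.1 p.2 = σ := by
  constructor
  · intro hσ
    have mapsTo_inl : Set.MapsTo (finSumFinEquiv.permCongr.symm σ)
        (Set.range (Sum.inl : Fin i → Fin i ⊕ Fin m)) (Set.range Sum.inl) := by
      rintro _ ⟨x, rfl⟩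
      have hx : (σ (Fin.castAdd m x)).val < i :=
        fixesPrefix_iff_forall_lt.mp hσ _ x.isLt
      exact ⟨⟨_, hx⟩, finSumFinEquiv.injective (by simp [Equiv.permCongr_apply])⟩
    obtain ⟨p, hp⟩ := Equiv.Perm.mem_sumCongrHom_range_of_perm_mapsTo_inl mapsTo_inl
    exact ⟨p, (Equiv.eq_symm_apply _).mp hp⟩
  · rintro ⟨⟨a, b⟩, rfl⟩
    exact fixesPrefix_permDirectSum_add_iff.mpr (fixesPrefix_zero b)

/-- The decomposition of the permutations fixing the prefix of size `i` as direct sums. -/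
noncomputable def permDirectSumEquiv :
    Equiv.Perm (Fin i) × Equiv.Perm (Fin m) ≃
      {σ : Equiv.Perm (Fin (i + m)) // FixesPrefix σ i} :=
  (Equiv.ofInjective _ permDirectSum_injective).trans
    (Equiv.subtypeEquivRight fun _ ↦ fixesPrefix_iff_exists_permDirectSum.symm)

theorem card_fixesPrefix_and {P : Equiv.Perm (Fin m) → Prop}
    {Q : Equiv.Perm (Fin (i + m)) → Prop} (hPQ : ∀ a b, P b ↔ Q (permDirectSum a b)) :
    Nat.card {σ : Equiv.Perm (Fin (i + m)) // FixesPrefix σ i ∧ Q σ} =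
      i ! * Nat.card {b : Equiv.Perm (Fin m) // P b} := by
  calc Nat.card {σ : Equiv.Perm (Fin (i + m)) // FixesPrefix σ i ∧ Q σ}
      = Nat.card {σ : {σ : Equiv.Perm (Fin (i + m)) // FixesPrefix σ i} // Q σ} :=
        Nat.card_congr (Equiv.subtypeSubtypeEquivSubtypeInter _ _).symm
    _ = Nat.card {p : Equiv.Perm (Fin i) × Equiv.Perm (Fin m) // P p.2} :=
        (Nat.card_congr (permDirectSumEquiv.subtypeEquiv fun p ↦ hPQ p.1 p.2)).symm
    _ = Nat.card ({b : Equiv.Perm (Fin m) // P b} × Equiv.Perm (Fin i)) :=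
        Nat.card_congr (((Equiv.prodComm _ _).subtypeEquiv fun _ ↦ Iff.rfl).trans
          Equiv.prodSubtypeFstEquivSubtypeProd)
    _ = i ! * Nat.card {b : Equiv.Perm (Fin m) // P b} := by
        rw [Nat.card_prod, Nat.card_perm, Nat.card_fin, mul_comm]

end DirectSum

theorem mem_Icc_inter_image_sub_iff {i m t : ℕ} {S : Finset ℕ} (hS : S ⊆ Finset.range (i + m)) :
    t ∈ Finset.Icc 1 (m - 1) ∩ S.image (fun s ↦ s - i) ↔ 0 < t ∧ i + t ∈ S := by
  simp only [Finset.mem_inter, Finset.mem_Icc, Finset.mem_image]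
  constructor
  · rintro ⟨⟨ht, -⟩, s, hs, hst⟩
    obtain rfl : s = i + t := by omega
    exact ⟨ht, hs⟩
  · rintro ⟨ht, hit⟩
    have hlt := Finset.mem_range.mp (hS hit)
    exact ⟨⟨ht, by omega⟩, i + t, hit, Nat.add_sub_cancel_left i t⟩

theorem forall_not_fixesPrefix_permDirectSum_iff {i m : ℕ} {S : Finset ℕ}
    {a : Equiv.Perm (Fin i)} {b : Equiv.Perm (Fin m)} :
    (∀ s ∈ S, i < s → ¬ FixesPrefix (permDirectSum a b) s) ↔
      ∀ t, 0 < t → i + t ∈ S → ¬ FixesPrefix b t := by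
  constructor
  · intro h t ht hit hb
    exact h (i + t) hit (Nat.lt_add_of_pos_right ht) (fixesPrefix_permDirectSum_add_iff.mpr hb)
  · intro h s hs his hab
    obtain ⟨t, rfl⟩ := Nat.exists_eq_add_of_le his.le
    exact h t (Nat.pos_of_lt_add_right his) hs (fixesPrefix_permDirectSum_add_iff.mp hab)

theorem count_fix_prefix_exactly_S_general {n i : ℕ} {S : Finset ℕ}
    (hS : S ⊆ Finset.range n) (hi : i ≤ n) :
    Nat.card {σ : Equiv.Perm (Fin n) //
      FixesPrefix σ i ∧ ∀ s ∈ S, i < s → ¬ FixesPrefix σ s}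
    = i ! * cS (n - i) (Finset.Icc 1 (n - i - 1) ∩ S.image (fun s => s - i)) := by
  obtain ⟨m, rfl⟩ := Nat.exists_eq_add_of_le hi
  rw [Nat.add_sub_cancel_left, cS]
  refine card_fixesPrefix_and fun a b ↦ ?_
  simp only [mem_Icc_inter_image_sub_iff hS, and_imp, forall_not_fixesPrefix_permDirectSum_iff]

/-- For every integer `n ≥ 1`, every subset `S ⊆ {1,…,n−1}`, and every `i ∈ S`, the number
of permutations `σ` of `{1,…,n}` such that `σ` fixes a prefix of size `i` and `σ` does not
fix a prefix of size `s` for any `s ∈ S` with `s > i` equals `i!·c_{n−i}^{S_i}`, where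
`S_i = {1,…,n−i−1} ∩ {s−i : s ∈ S}`. -/
theorem count_fix_prefix_exactly_S (n : ℕ) (hn : 1 ≤ n)
    (S : Finset ℕ) (hS : S ⊆ Finset.Icc 1 (n - 1)) (i : ℕ) (hi : i ∈ S) :
    Nat.card {σ : Equiv.Perm (Fin n) //
      FixesPrefix σ i ∧ ∀ s ∈ S, i < s → ¬ FixesPrefix σ s}
    = i ! * cS (n - i) (Finset.Icc 1 (n - i - 1) ∩ S.image (fun s => s - i)) := by
  have hSn : S ⊆ Finset.range n := fun s hs ↦
    Finset.mem_range.mpr (Nat.lt_of_le_sub_one hn (Finset.mem_Icc.mp (hS hs)).2)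
  exact count_fix_prefix_exactly_S_general hSn (Finset.mem_range.mp (hSn hi)).le
end

section
/- Let k and i be integers with 1 < i < k. The number of permutations σ of {1,…,k} such that σ fixes no prefix of size j for any 1 ≤ j ≤ k−1, and moreover σ(1) ≠ i, σ(i) ≠ 1 and σ(i) ≠ i, equals c_k − 2·c_{k−1}^{{i−1,…,k−2}} + c_{k−2}^{{i−2,…,k−3}} − c_{k−1}. (Here, when i = 2 the set {i−2,…,k−3} contains 0, and c_{k−2}^{{0,…,k−3}} = 0. These permutations are exactly the subdivergence-free gluings of the tree f_{k,i} with itself, where the leaves are labelled 1 through k from the deepest leaf upward and the leaf below the extra edge receives label i.) -/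
open Nat Finset

/-!
Inclusion–exclusion over the three forbidden conditions `σ(1) = i`, `σ(i) = 1`, `σ(i) = i`, of
which only the first two are compatible. Each resulting term counts `S`-connected permutations with
a prescribed point `p ↦ q`. Deleting that point leaves a permutation `τ` of size one less: prefixes
ending before both `p` and `q` are fixed by `σ` iff they are fixed by `τ`, prefixes reaching past
both are fixed iff the prefix one shorter is fixed by `τ`, and prefixes separating `p` from `q` are
never fixed. So the count is again a number of connected permutations, for a modified set `S`.
-/

theorem card_and_not {α : Type*} [Finite α] (P Q : α → Prop) :
    (Nat.card {x // P x ∧ ¬ Q x} : ℤ) = Nat.card {x // P x} - Nat.card {x // P x ∧ Q x} :=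
  eq_sub_of_add_eq' <| mod_cast
    Set.ncard_inter_add_ncard_sdiff_eq_ncard {x | P x} {x | Q x} (Set.toFinite _)

theorem card_and_not_and_not_and_not {α : Type*} [Finite α] (P A B C : α → Prop)
    (hAC : ∀ x, A x → ¬ C x) (hBC : ∀ x, B x → ¬ C x) :
    (Nat.card {x // P x ∧ ¬ A x ∧ ¬ B x ∧ ¬ C x} : ℤ) =
      Nat.card {x // P x} - Nat.card {x // P x ∧ A x} - Nat.card {x // P x ∧ B x}
        + Nat.card {x // (P x ∧ B x) ∧ A x} - Nat.card {x // P x ∧ C x} := by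
  have only_C (x : α) : ((P x ∧ ¬ A x) ∧ ¬ B x) ∧ C x ↔ P x ∧ C x :=
    ⟨fun h => ⟨h.1.1.1, h.2⟩, fun h =>
      ⟨⟨⟨h.1, fun hA => hAC x hA h.2⟩, fun hB => hBC x hB h.2⟩, h.2⟩⟩
  simp only [← and_assoc]
  rw [card_and_not _ C, card_and_not _ B, card_and_not P A]
  simp only [only_C, and_right_comm (b := ¬ A _) (c := B _)]
  rw [card_and_not _ A]
  ring

theorem fixesPrefix_iff {n : ℕ} (σ : Equiv.Perm (Fin n)) (j : ℕ) :
    FixesPrefix σ j ↔ ∀ x : Fin n, (σ x).val < j ↔ x.val < j := by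
  rw [FixesPrefix, Finset.ext_iff, ← σ.forall_congr_right]
  refine forall_congr' fun x => ?_
  rw [σ.injective.mem_finset_image]
  simp only [pref, mem_filter_univ, Nat.succ_le_iff, iff_comm]

theorem val_succAbove {n : ℕ} (p : Fin (n + 1)) (x : Fin n) :
    (p.succAbove x).val = if x.val < p.val then x.val else x.val + 1 := by
  simp only [Fin.succAbove, Fin.lt_def, Fin.val_castSucc]
  split_ifs <;> simp

/-- Insertion of a point `p ↦ q` into a permutation of size `n`: the positions other than `p` and
the values other than `q` are relabelled increasingly. It is bundled as an equivalence, whose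
inverse deletes the point from a permutation that maps `p` to `q`. -/
def insertPoint {n : ℕ} (p q : Fin (n + 1)) :
    Equiv.Perm (Fin n) ≃ {σ : Equiv.Perm (Fin (n + 1)) // σ p = q} :=
  ((Equiv.refl _).equivCongr (finSuccAboveEquiv q)).trans <|
    (Equiv.optionSubtype q).symm.trans <|
      ((finSuccEquiv' p).symm.equivCongr (Equiv.refl _)).subtypeEquiv fun _ => by simp

theorem insertPoint_apply_succAbove {n : ℕ} (p q : Fin (n + 1)) (τ : Equiv.Perm (Fin n))
    (x : Fin n) : (insertPoint p q τ).val (p.succAbove x) = q.succAbove (τ x) := by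
  simp [insertPoint, finSuccAboveEquiv_apply]

theorem card_perm_and_apply_eq {n : ℕ} (p q : Fin (n + 1)) (P : Equiv.Perm (Fin (n + 1)) → Prop) :
    Nat.card {σ // P σ ∧ σ p = q} = Nat.card {τ // P (insertPoint p q τ)} :=
  Nat.card_congr <| (Equiv.subtypeEquivRight fun _ => and_comm).trans <|
    (Equiv.subtypeSubtypeEquivSubtypeInter _ P).symm.trans <|
      ((insertPoint p q).subtypeEquiv fun _ => Iff.rfl).symm

theorem fixesPrefix_insertPoint_iff {n : ℕ} (p q : Fin (n + 1)) (τ : Equiv.Perm (Fin n)) (j : ℕ) :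
    FixesPrefix (insertPoint p q τ).val j ↔
      j ≤ min p.val q.val ∧ FixesPrefix τ j ∨ max p.val q.val < j ∧ FixesPrefix τ (j - 1) := by
  simp only [fixesPrefix_iff, Fin.forall_iff_succAbove p, (insertPoint p q τ).property,
    insertPoint_apply_succAbove, val_succAbove]
  rcases lt_or_ge p.val j with hp | hp <;> rcases lt_or_ge q.val j with hq | hq
  · have reaches : max p.val q.val < j := max_lt hp hq
    have not_le : ¬ j ≤ min p.val q.val := by omega
    simp only [hp, hq, reaches, not_le, true_and, false_and, false_or]
    refine forall_congr' fun x => ?_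
    split_ifs <;> omega
  · grind
  · grind
  · have le : j ≤ min p.val q.val := le_min hp hq
    have not_lt : ¬ max p.val q.val < j := by omega
    simp only [hp.not_gt, hq.not_gt, le, not_lt, true_and, false_and, or_false]
    refine forall_congr' fun x => ?_
    split_ifs <;> omega

/-- `S`-connectedness of a permutation, the property counted by `cS`; a permutation of size `n` is
connected when it is `{1, …, n - 1}`-connected. -/
def IsSConnected {n : ℕ} (S : Finset ℕ) (σ : Equiv.Perm (Fin n)) : Prop :=
  ∀ j ∈ S, ¬ FixesPrefix σ j

theorem card_isSConnected_eq_cS (n : ℕ) (S : Finset ℕ) :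
    Nat.card {σ : Equiv.Perm (Fin n) // IsSConnected S σ} = cS n S := rfl

theorem isSConnected_Icc_iff {n : ℕ} (a b : ℕ) (σ : Equiv.Perm (Fin n)) :
    IsSConnected (Icc a b) σ ↔ ∀ j, a ≤ j → j ≤ b → ¬ FixesPrefix σ j := by
  simp only [IsSConnected, mem_Icc, and_imp]

theorem c_eq_cS (n : ℕ) : c n = cS n (Icc 1 (n - 1)) := by
  simp only [c, ← isSConnected_Icc_iff, card_isSConnected_eq_cS]

/-- The prefix sizes that remain forbidden after deleting a point `p ↦ q` from an `S`-connected
permutation. Here `p` and `q` are values of elements of `Fin n`, so that the prefix of size `j`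
contains `p` iff `p < j`. -/
def contractSizes (p q : ℕ) (S : Finset ℕ) : Finset ℕ :=
  {j ∈ S | j ≤ min p q} ∪ {j ∈ S | max p q < j}.image (· - 1)

theorem mem_contractSizes {p q j : ℕ} {S : Finset ℕ} :
    j ∈ contractSizes p q S ↔ j ∈ S ∧ j ≤ min p q ∨ j + 1 ∈ S ∧ max p q ≤ j := by
  simp only [contractSizes, mem_union, mem_filter, mem_image]
  refine or_congr_right ⟨?_, fun ⟨hS, hj⟩ => ⟨j + 1, ⟨hS, Nat.lt_succ_of_le hj⟩, rfl⟩⟩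
  rintro ⟨i, ⟨hS, hi⟩, rfl⟩
  rw [Nat.sub_add_cancel (by omega)]
  exact ⟨hS, by omega⟩

theorem contractSizes_Icc_of_min_lt {p q a : ℕ} (h : min p q < a) (b : ℕ) :
    contractSizes p q (Icc a (b + 1)) = Icc (max (a - 1) (max p q)) b := by
  ext j
  simp only [mem_contractSizes, mem_Icc]
  omega

theorem contractSizes_self_Icc {p b : ℕ} (a : ℕ) (hp : a ≤ p) (hb : p ≤ b) :
    contractSizes p p (Icc a (b + 1)) = Icc a b := by
  ext j
  simp only [mem_contractSizes, mem_Icc]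
  omega

theorem isSConnected_insertPoint_iff {n : ℕ} (p q : Fin (n + 1)) (S : Finset ℕ)
    (τ : Equiv.Perm (Fin n)) :
    IsSConnected S (insertPoint p q τ).val ↔ IsSConnected (contractSizes p q S) τ := by
  simp only [IsSConnected, contractSizes, fixesPrefix_insertPoint_iff, forall_mem_union,
    forall_mem_image, mem_filter]
  grind

theorem card_isSConnected_apply_eq {n : ℕ} (p q : Fin (n + 1)) (S : Finset ℕ) :
    Nat.card {σ : Equiv.Perm (Fin (n + 1)) // IsSConnected S σ ∧ σ p = q} =
      cS n (contractSizes p q S) := by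
  simp only [card_perm_and_apply_eq, isSConnected_insertPoint_iff, card_isSConnected_eq_cS]

theorem card_isSConnected_apply_eq_apply_eq {n : ℕ} (p q : Fin (n + 2)) (x y : Fin (n + 1))
    (S : Finset ℕ) :
    Nat.card {σ : Equiv.Perm (Fin (n + 2)) //
        (IsSConnected S σ ∧ σ (p.succAbove x) = q.succAbove y) ∧ σ p = q} =
      cS n (contractSizes x y (contractSizes p q S)) := by
  simp only [card_perm_and_apply_eq p q, insertPoint_apply_succAbove, Fin.succAbove_right_inj,
    isSConnected_insertPoint_iff, card_isSConnected_apply_eq]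

theorem card_connected_apply_zero_eq {n : ℕ} (x : Fin (n + 2)) :
    Nat.card {σ // IsSConnected (Icc 1 (n + 1)) σ ∧ σ 0 = x} = cS (n + 1) (Icc x n) := by
  simp [card_isSConnected_apply_eq, contractSizes_Icc_of_min_lt]

theorem card_connected_apply_eq_zero {n : ℕ} (x : Fin (n + 2)) :
    Nat.card {σ // IsSConnected (Icc 1 (n + 1)) σ ∧ σ x = 0} = cS (n + 1) (Icc x n) := by
  simp [card_isSConnected_apply_eq, contractSizes_Icc_of_min_lt]

theorem card_connected_swap_zero_succ {n : ℕ} (x : Fin (n + 2)) :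
    Nat.card {σ // (IsSConnected (Icc 1 (n + 2)) σ ∧ σ x.succ = 0) ∧ σ 0 = x.succ} =
      cS (n + 1) (Icc x n) := by
  simpa [contractSizes_Icc_of_min_lt] using
    card_isSConnected_apply_eq_apply_eq 0 x.succ x 0 (Icc 1 (n + 2))

theorem card_connected_apply_eq_self {n : ℕ} {x : Fin (n + 2)} (hx : 1 ≤ x.val) (hxn : x.val ≤ n) :
    Nat.card {σ // IsSConnected (Icc 1 (n + 1)) σ ∧ σ x = x} = c (n + 1) := by
  rw [card_isSConnected_apply_eq, contractSizes_self_Icc 1 hx hxn, c_eq_cS, Nat.add_sub_cancel]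

/-- Subdivergence-free gluings of `f_{k,i}` with itself, `1 < i < k`: the number of
permutations `σ` of `{1,…,k}` fixing no prefix of size `1,…,k−1` with `σ(1) ≠ i`,
`σ(i) ≠ 1` and `σ(i) ≠ i` equals
`c_k − 2·c_{k−1}^{{i−1,…,k−2}} + c_{k−2}^{{i−2,…,k−3}} − c_{k−1}`.
(Labels: the element of `Fin k` with value `v` has label `v + 1`.) -/
theorem line_with_extra_fan (k i : ℕ) (h1 : 1 < i) (h2 : i < k) :
    (Nat.card {σ : Equiv.Perm (Fin k) //
      (∀ j, 1 ≤ j → j ≤ k - 1 → ¬ FixesPrefix σ j) ∧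
      σ ⟨0, by omega⟩ ≠ ⟨i - 1, by omega⟩ ∧
      σ ⟨i - 1, by omega⟩ ≠ ⟨0, by omega⟩ ∧
      σ ⟨i - 1, by omega⟩ ≠ ⟨i - 1, by omega⟩} : ℤ)
    = (c k : ℤ) - 2 * (cS (k - 1) (Finset.Icc (i - 1) (k - 2)) : ℤ)
      + (cS (k - 2) (Finset.Icc (i - 2) (k - 3)) : ℤ) - (c (k - 1) : ℤ) := by
  obtain ⟨m, rfl⟩ : ∃ m, i = m + 2 := Nat.exists_eq_add_of_le' h1
  obtain ⟨n, rfl⟩ : ∃ n, k = n + 3 := Nat.exists_eq_add_of_le' (by omega)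
  let x : Fin (n + 2) := ⟨m, by omega⟩
  have incl_excl := card_and_not_and_not_and_not (IsSConnected (Icc 1 (n + 2)))
    (fun σ => σ 0 = x.succ) (fun σ => σ x.succ = 0) (fun σ => σ x.succ = x.succ)
    (fun σ hA hC => x.succ_ne_zero (σ.injective (hC.trans hA.symm)))
    (fun σ hB hC => x.succ_ne_zero (hC.symm.trans hB))
  rw [card_connected_apply_zero_eq, card_connected_apply_eq_zero, card_connected_swap_zero_succ,
    card_connected_apply_eq_self (x := x.succ) (Nat.succ_pos x) (Nat.lt_of_add_lt_add_right h2),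
    card_isSConnected_eq_cS] at incl_excl
  simp only [isSConnected_Icc_iff] at incl_excl
  refine incl_excl.trans ?_
  rw [c_eq_cS (n + 3)]
  change _ = (cS (n + 3) (Icc 1 (n + 2)) : ℤ) - 2 * cS (n + 2) (Icc x.succ (n + 1))
    + cS (n + 1) (Icc x n) - c (n + 2)
  ring
end
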